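/- Let (P, V, c, L) be a budgeting scenario with n voters, let ℓ ∈ {1,...,L}, let V' ⊆ V with |V'| ≥ ℓn/L, and let P' ⊆ P. Suppose every voter in V' assigns value 0 to every project outside P'. Let S ⊆ P \ P' be any set of projects such that for each p ∈ S, the sum of support Σ_{j=1}^n v_j(p) is strictly greater than (n/L) · c(p). Then c(S) ≤ L − ℓ. -/

import Mathlib

open Finset

/-- A participatory-budgeting scenario: a finite set `P` of projects (of type `α`),
voters indexed by `ι`, each voter `j` with a cumulative ballot `ballot j` that is
nonnegative, vanishes outside `P`, and sums to `1` over `P`; each project has a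
positive natural-number cost, and `L` is the budget limit. -/
structure Scenario (α ι : Type*) where
  P : Finset α
  ballot : ι → α → ℝ
  cost : α → ℕ
  L : ℕ
  ballot_nonneg : ∀ j p, 0 ≤ ballot j p
  ballot_outside : ∀ j, ∀ p ∉ P, ballot j p = 0
  ballot_sum : ∀ j, ∑ p ∈ P, ballot j p = 1
  cost_pos : ∀ p ∈ P, 0 < cost p

/-!
Count the total support of `S` in two ways. Projectwise it is at least `n / L * c(S)`; voterwise
only the voters outside `V'` contribute, each at most `1`, so it is at most
`n - |V'| ≤ n / L * (L - ℓ)`. Cancel `n / L`.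
-/

theorem sum_le_card_sub_card_of_le_one {ι R : Type*} [Fintype ι] [Ring R] [PartialOrder R]
    [IsOrderedRing R] {f : ι → R} {s : Finset ι} (hs : ∀ j ∈ s, f j ≤ 0) (hf : ∀ j ∉ s, f j ≤ 1) :
    ∑ j, f j ≤ Fintype.card ι - #s := by
  classical
  have h_compl : ∑ j ∈ sᶜ, f j ≤ #sᶜ := by
    simpa using sum_le_card_nsmul sᶜ f 1 fun j hj => hf j (mem_compl.1 hj)
  calc ∑ j, f j = ∑ j ∈ s, f j + ∑ j ∈ sᶜ, f j := (sum_add_sum_compl s f).symm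
    _ ≤ 0 + #sᶜ := add_le_add (sum_nonpos hs) h_compl
    _ = Fintype.card ι - #s := by rw [zero_add, card_compl, Nat.cast_sub s.card_le_univ]

section Field

variable {α ι K : Type*} [Fintype ι] [Field K] [LinearOrder K] [IsStrictOrderedRing K]

theorem le_sub_of_div_mul_le_sub {n m L ℓ C : K} (hn : 0 < n) (hL : 0 < L)
    (hm : ℓ * n / L ≤ m) (hC : n / L * C ≤ n - m) : C ≤ L - ℓ := by
  refine le_of_mul_le_mul_left ?_ (div_pos hn hL)
  calc n / L * C ≤ n - m := hC
    _ ≤ n - ℓ * n / L := sub_le_sub_left hm n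
    _ = n / L * (L - ℓ) := by field_simp

theorem cost_of_high_ratio_outside_le_general {v : ι → α → K} {c : α → K} {L ℓ : K}
    {V' : Finset ι} {S : Finset α} (hL : 0 < L) (hℓL : ℓ ≤ L)
    (hV' : ℓ * Fintype.card ι / L ≤ #V') (hzero : ∀ j ∈ V', ∀ p ∈ S, v j p = 0)
    (hone : ∀ j, ∑ p ∈ S, v j p ≤ 1)
    (hsup : ∀ p ∈ S, Fintype.card ι / L * c p < ∑ j, v j p) :
    ∑ p ∈ S, c p ≤ L - ℓ := by
  cases isEmpty_or_nonempty ι with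
  | inl _ =>
    have hS : S = ∅ := eq_empty_of_forall_notMem fun p hp => by simpa using hsup p hp
    simpa [hS] using hℓL
  | inr _ =>
    refine le_sub_of_div_mul_le_sub (Nat.cast_pos.2 Fintype.card_pos) hL hV' ?_
    calc Fintype.card ι / L * ∑ p ∈ S, c p = ∑ p ∈ S, Fintype.card ι / L * c p := mul_sum ..
      _ ≤ ∑ p ∈ S, ∑ j, v j p := sum_le_sum fun p hp => (hsup p hp).le
      _ = ∑ j, ∑ p ∈ S, v j p := sum_comm
      _ ≤ Fintype.card ι - #V' :=
        sum_le_card_sub_card_of_le_one (fun j hj => (sum_eq_zero (hzero j hj)).le)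
          fun j _ => hone j

end Field

theorem Scenario.sum_ballot_le_one {α ι : Type*} (E : Scenario α ι) {S : Finset α}
    (hS : S ⊆ E.P) (j : ι) : ∑ p ∈ S, E.ballot j p ≤ 1 :=
  (sum_le_sum_of_subset_of_nonneg hS fun p _ _ => E.ballot_nonneg j p).trans_eq (E.ballot_sum j)

/-- Counting bound used in the proof that Greedy-by-Support-over-Cost satisfies
Weak-PR: let `ℓ ∈ {1,…,L}`, let `V'` be a group of at least `ℓn/L` voters each
of whom assigns value `0` to every project outside `P'`, and let `S ⊆ P \ P'`
be a set of projects each of whose total support `∑_j v_j(p)` strictly exceeds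
`(n/L)·c(p)`. Then `c(S) ≤ L − ℓ`. -/
theorem cost_of_high_ratio_outside_le {α ι : Type*} [DecidableEq α] [Fintype ι]
    (E : Scenario α ι) (ℓ : ℕ) (hℓ1 : 1 ≤ ℓ) (hℓL : ℓ ≤ E.L)
    (V' : Finset ι)
    (hV' : (ℓ : ℝ) * (Fintype.card ι : ℝ) / (E.L : ℝ) ≤ (V'.card : ℝ))
    (P' : Finset α)
    (hzero : ∀ j ∈ V', ∀ p ∉ P', E.ballot j p = 0)
    (S : Finset α) (hS : S ⊆ E.P \ P')
    (hsup : ∀ p ∈ S,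
      (Fintype.card ι : ℝ) / (E.L : ℝ) * (E.cost p : ℝ) < ∑ j : ι, E.ballot j p) :
    ((∑ p ∈ S, E.cost p : ℕ) : ℝ) ≤ (E.L : ℝ) - (ℓ : ℝ) := by
  rw [Nat.cast_sum]
  exact cost_of_high_ratio_outside_le_general (Nat.cast_pos.2 (hℓ1.trans hℓL)) (Nat.cast_le.2 hℓL)
    hV' (fun j hj p hp => hzero j hj p (mem_sdiff.1 (hS hp)).2)
    (E.sum_ballot_le_one (hS.trans sdiff_subset)) hsup
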